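/- Let (𝔤,[-,-]₁,[-,-]₂) be a compatible Lie algebra over ℂ. Then there exist bilinear operations ∘ and ∗ on 𝔤 making (𝔤,∘,∗) a compatible anti-pre-Lie algebra with x∘y−y∘x = [x,y]₁ and x∗y−y∗x = [x,y]₂ for all x,y ∈ 𝔤, if and only if there exist a representation (ρ,μ,V) of (𝔤,[-,-]₁,[-,-]₂) and an invertible anti-O-operator T : V → 𝔤 associated to (ρ,μ,V). -/

import Mathlib

universe u

/-- An anti-pre-Lie algebra structure. -/
def IsAntiPreLie {A : Type*} [AddCommGroup A] [Module ℂ A]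
    (m : A →ₗ[ℂ] A →ₗ[ℂ] A) : Prop :=
  (∀ x y z : A, m x (m y z) - m y (m x z) = m (m y x - m x y) z) ∧
  (∀ x y z : A, m (m x y - m y x) z + m (m y z - m z y) x + m (m z x - m x z) y = 0)

/-- A bilinear operation is a Lie bracket. -/
def IsLieBr {g : Type*} [AddCommGroup g] [Module ℂ g]
    (b : g →ₗ[ℂ] g →ₗ[ℂ] g) : Prop :=
  (∀ x y : g, b x y = -b y x) ∧
  (∀ x y z : g, b (b x y) z + b (b y z) x + b (b z x) y = 0)

/-- `r` is a representation of the Lie bracket `b` on `V`. -/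
def IsRep {g V : Type*} [AddCommGroup g] [Module ℂ g] [AddCommGroup V] [Module ℂ V]
    (b : g →ₗ[ℂ] g →ₗ[ℂ] g) (r : g →ₗ[ℂ] V →ₗ[ℂ] V) : Prop :=
  ∀ x y : g, r (b x y) = r x ∘ₗ r y - r y ∘ₗ r x

/-- `T` is an anti-O-operator of `(g, b)` associated to `r`. -/
def IsAntiO {g V : Type*} [AddCommGroup g] [Module ℂ g] [AddCommGroup V] [Module ℂ V]
    (b : g →ₗ[ℂ] g →ₗ[ℂ] g) (r : g →ₗ[ℂ] V →ₗ[ℂ] V) (T : V →ₗ[ℂ] g) : Prop :=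
  ∀ u v : V, b (T u) (T v) = T (r (T v) u - r (T u) v)

/-!
An operation `m` is anti-pre-Lie precisely when its commutator is a Lie bracket represented by the
negated left multiplications `x ↦ -m x`: the representation identity forces the Jacobiator of the
commutator to be twice the cyclic sum in the second anti-pre-Lie axiom, and `2` can be cancelled.
For an invertible `T`, transporting `r` along `T` and negating gives the operation
`x ∘ y = -T (r x (T⁻¹ y))`, and `T` is an anti-O-operator exactly when the commutator of `∘` is
the given bracket. As `∘` is linear in `r`, the equivalence passes from single brackets to pencils.
-/

section CommRing

variable {R g V : Type*} [CommRing R] [AddCommGroup g] [Module R g] [AddCommGroup V] [Module R V]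

/-- Anti-pre-Lie operations over an arbitrary commutative ring; `IsAntiPreLie` is the case `ℂ`. -/
def IsAntiPreLieProduct (m : g →ₗ[R] g →ₗ[R] g) : Prop :=
  (∀ x y z : g, m x (m y z) - m y (m x z) = m (m y x - m x y) z) ∧
  (∀ x y z : g, m (m x y - m y x) z + m (m y z - m z y) x + m (m z x - m x z) y = 0)

/-- Lie brackets over an arbitrary commutative ring, with skew-symmetry in place of `b x x = 0`;
`IsLieBr` is the case `ℂ`. -/
def IsLieBracket (b : g →ₗ[R] g →ₗ[R] g) : Prop :=
  (∀ x y : g, b x y = -b y x) ∧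
  (∀ x y z : g, b (b x y) z + b (b y z) x + b (b z x) y = 0)

/-- Representations of a bracket over an arbitrary commutative ring; `IsRep` is the case `ℂ`. -/
def IsLieRepresentation (b : g →ₗ[R] g →ₗ[R] g) (r : g →ₗ[R] V →ₗ[R] V) : Prop :=
  ∀ x y : g, r (b x y) = r x ∘ₗ r y - r y ∘ₗ r x

/-- Anti-O-operators over an arbitrary commutative ring; `IsAntiO` is the case `ℂ`. -/
def IsAntiOOperator (b : g →ₗ[R] g →ₗ[R] g) (r : g →ₗ[R] V →ₗ[R] V) (T : V →ₗ[R] g) : Prop :=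
  ∀ u v : V, b (T u) (T v) = T (r (T v) u - r (T u) v)

/-- The commutator `[x, y] = m x y - m y x` of a bilinear operation `m`, as a linear function
of `m` so that it can be applied to pencils of operations. -/
def commutatorBracket : (g →ₗ[R] g →ₗ[R] g) →ₗ[R] (g →ₗ[R] g →ₗ[R] g) :=
  LinearMap.id - LinearMap.lflip.toLinearMap

/-- The operation `x ∘ y = -e (r x (e⁻¹ y))` which an invertible map `e : V → g` induces on `g`
from an action `r` of `g` on `V`, as a linear function of `r`. -/
def antiOProduct (e : V ≃ₗ[R] g) : (g →ₗ[R] V →ₗ[R] V) →ₗ[R] (g →ₗ[R] g →ₗ[R] g) :=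
  -LinearMap.compRight R e.conj.toLinearMap

@[simp]
lemma commutatorBracket_apply (m : g →ₗ[R] g →ₗ[R] g) (x y : g) :
    commutatorBracket m x y = m x y - m y x :=
  rfl

@[simp]
lemma antiOProduct_apply (e : V ≃ₗ[R] g) (r : g →ₗ[R] V →ₗ[R] V) (x y : g) :
    antiOProduct e r x y = -e (r x (e.symm y)) :=
  rfl

lemma antiOProduct_refl_neg (m : g →ₗ[R] g →ₗ[R] g) :
    antiOProduct (LinearEquiv.refl R g) (-m) = m := by
  ext x y
  simp

lemma commutatorBracket_eq_iff {m b : g →ₗ[R] g →ₗ[R] g} :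
    commutatorBracket m = b ↔ ∀ x y, m x y - m y x = b x y := by
  simp only [LinearMap.ext_iff, commutatorBracket_apply]

lemma commutatorBracket_pencil_eq_iff {m₁ m₂ b₁ b₂ : g →ₗ[R] g →ₗ[R] g} :
    (∀ k₁ k₂ : R, commutatorBracket (k₁ • m₁ + k₂ • m₂) = k₁ • b₁ + k₂ • b₂) ↔
      commutatorBracket m₁ = b₁ ∧ commutatorBracket m₂ = b₂ := by
  refine ⟨fun h => ⟨by simpa using h 1 0, by simpa using h 0 1⟩, ?_⟩
  rintro ⟨rfl, rfl⟩ k₁ k₂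
  rw [map_add, map_smul, map_smul]

lemma isLieRepresentation_neg_iff {m : g →ₗ[R] g →ₗ[R] g} :
    IsLieRepresentation (commutatorBracket m) (-m) ↔
      ∀ x y z, m x (m y z) - m y (m x z) = m (m y x - m x y) z := by
  simp only [IsLieRepresentation, LinearMap.ext_iff]
  refine forall₃_congr fun x y z => ?_
  simp [eq_comm]

lemma commutatorBracket_jacobiator {m : g →ₗ[R] g →ₗ[R] g}
    (hm : ∀ x y z, m x (m y z) - m y (m x z) = m (m y x - m x y) z) (x y z : g) :
    commutatorBracket m (commutatorBracket m x y) z +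
        commutatorBracket m (commutatorBracket m y z) x +
        commutatorBracket m (commutatorBracket m z x) y =
      (2 : R) • (m (m x y - m y x) z + m (m y z - m z y) x + m (m z x - m x z) y) := by
  have cyclic_sum_right : m z (m x y - m y x) + m x (m y z - m z y) + m y (m z x - m x z) =
      -(m (m x y - m y x) z + m (m y z - m z y) x + m (m z x - m x z) y) := by
    rw [← hm y x z, ← hm z y x, ← hm x z y]
    simp only [map_sub]
    abel
  calc _ = (m (m x y - m y x) z + m (m y z - m z y) x + m (m z x - m x z) y) -
        (m z (m x y - m y x) + m x (m y z - m z y) + m y (m z x - m x z)) := by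
        simp only [commutatorBracket_apply]
        abel
    _ = _ := by
        rw [cyclic_sum_right]
        module

theorem isAntiPreLieProduct_iff (h2 : IsSMulRegular g (2 : R)) {m : g →ₗ[R] g →ₗ[R] g} :
    IsAntiPreLieProduct m ↔
      IsLieBracket (commutatorBracket m) ∧ IsLieRepresentation (commutatorBracket m) (-m) := by
  rw [isLieRepresentation_neg_iff, and_comm (a := IsLieBracket _)]
  refine and_congr_right fun hm => ?_
  constructor
  · intro cyclic_sum_eq_zero
    refine ⟨fun x y => (neg_sub (m y x) (m x y)).symm, fun x y z => ?_⟩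
    rw [commutatorBracket_jacobiator hm, cyclic_sum_eq_zero, smul_zero]
  · intro hLie x y z
    apply h2.right_eq_zero_of_smul
    rw [← commutatorBracket_jacobiator hm]
    exact hLie.2 x y z

lemma isLieRepresentation_neg_antiOProduct_iff (e : V ≃ₗ[R] g) {b : g →ₗ[R] g →ₗ[R] g}
    {r : g →ₗ[R] V →ₗ[R] V} :
    IsLieRepresentation b (-antiOProduct e r) ↔ IsLieRepresentation b r := by
  have conj_eq (x : g) : (-antiOProduct e r) x = e.conj (r x) := by
    ext y
    simp
  simp only [IsLieRepresentation, conj_eq, ← LinearEquiv.conj_comp, ← map_sub,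
    e.conj.injective.eq_iff]

lemma isAntiOOperator_iff_commutatorBracket_antiOProduct (e : V ≃ₗ[R] g)
    {b : g →ₗ[R] g →ₗ[R] g} {r : g →ₗ[R] V →ₗ[R] V} :
    IsAntiOOperator b r e ↔ commutatorBracket (antiOProduct e r) = b := by
  rw [commutatorBracket_eq_iff, IsAntiOOperator, e.forall_congr_left]
  refine forall_congr' fun x => ?_
  rw [e.forall_congr_left]
  refine forall_congr' fun y => ?_
  simp [eq_comm, neg_add_eq_sub]

theorem isAntiPreLieProduct_antiOProduct_iff (h2 : IsSMulRegular g (2 : R))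
    {b : g →ₗ[R] g →ₗ[R] g} (hb : IsLieBracket b) (e : V ≃ₗ[R] g) {r : g →ₗ[R] V →ₗ[R] V} :
    IsAntiPreLieProduct (antiOProduct e r) ∧ commutatorBracket (antiOProduct e r) = b ↔
      IsLieRepresentation b r ∧ IsAntiOOperator b r e := by
  rw [isAntiOOperator_iff_commutatorBracket_antiOProduct]
  refine and_congr_left fun hcomm => ?_
  rw [isAntiPreLieProduct_iff h2, isLieRepresentation_neg_antiOProduct_iff, hcomm,
    and_iff_right hb]

theorem isAntiPreLieProduct_antiOProduct_pencil_iff (h2 : IsSMulRegular g (2 : R))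
    {b₁ b₂ : g →ₗ[R] g →ₗ[R] g}
    (hcompat : ∀ k₁ k₂ : R, IsLieBracket (k₁ • b₁ + k₂ • b₂)) (e : V ≃ₗ[R] g)
    {ρ μ : g →ₗ[R] V →ₗ[R] V} :
    ((∀ k₁ k₂ : R, IsAntiPreLieProduct (k₁ • antiOProduct e ρ + k₂ • antiOProduct e μ)) ∧
      commutatorBracket (antiOProduct e ρ) = b₁ ∧ commutatorBracket (antiOProduct e μ) = b₂) ↔
    (∀ k₁ k₂ : R, IsLieRepresentation (k₁ • b₁ + k₂ • b₂) (k₁ • ρ + k₂ • μ)) ∧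
      ∀ k₁ k₂ : R, IsAntiOOperator (k₁ • b₁ + k₂ • b₂) (k₁ • ρ + k₂ • μ) e := by
  rw [← commutatorBracket_pencil_eq_iff]
  simp only [← map_smul, ← map_add, ← forall_and,
    isAntiPreLieProduct_antiOProduct_iff h2 (hcompat _ _)]

end CommRing

theorem compatible_antiPreLie_exists_iff_invertible_antiO_general {R : Type*} {g : Type u}
    [CommRing R] [AddCommGroup g] [Module R g] (h2 : IsSMulRegular g (2 : R))
    (b₁ b₂ : g →ₗ[R] g →ₗ[R] g)
    (hcompat : ∀ k₁ k₂ : R, IsLieBracket (k₁ • b₁ + k₂ • b₂)) :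
    (∃ c s : g →ₗ[R] g →ₗ[R] g,
      (∀ k₁ k₂ : R, IsAntiPreLieProduct (k₁ • c + k₂ • s)) ∧
      (∀ x y : g, c x y - c y x = b₁ x y) ∧
      (∀ x y : g, s x y - s y x = b₂ x y)) ↔
    (∃ (V : Type u) (_ : AddCommGroup V) (_ : Module R V)
        (ρ μ : g →ₗ[R] V →ₗ[R] V) (T : V →ₗ[R] g),
      (∀ k₁ k₂ : R, IsLieRepresentation (k₁ • b₁ + k₂ • b₂) (k₁ • ρ + k₂ • μ)) ∧
      (∀ k₁ k₂ : R, IsAntiOOperator (k₁ • b₁ + k₂ • b₂) (k₁ • ρ + k₂ • μ) T) ∧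
      Function.Bijective T) := by
  simp only [← commutatorBracket_eq_iff]
  constructor
  · rintro ⟨c, s, h⟩
    rw [← antiOProduct_refl_neg c, ← antiOProduct_refl_neg s,
      isAntiPreLieProduct_antiOProduct_pencil_iff h2 hcompat] at h
    exact ⟨g, _, _, -c, -s, LinearEquiv.refl R g, h.1, h.2, (LinearEquiv.refl R g).bijective⟩
  · rintro ⟨V, _, _, ρ, μ, T, hrep, hT, hbij⟩
    let e := LinearEquiv.ofBijective T hbij
    exact ⟨antiOProduct e ρ, antiOProduct e μ,
      (isAntiPreLieProduct_antiOProduct_pencil_iff h2 hcompat e).mpr ⟨hrep, hT⟩⟩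

/-- A compatible Lie algebra `(g,b₁,b₂)` admits a compatible
anti-pre-Lie algebra structure whose commutators are the given brackets iff there
exist a representation `(ρ,μ,V)` of `(g,b₁,b₂)` and an invertible anti-O-operator
`T : V → g` associated to it. -/
theorem compatible_antiPreLie_exists_iff_invertible_antiO {g : Type u}
    [AddCommGroup g] [Module ℂ g]
    (b₁ b₂ : g →ₗ[ℂ] g →ₗ[ℂ] g)
    (hcompat : ∀ k₁ k₂ : ℂ, IsLieBr (k₁ • b₁ + k₂ • b₂)) :
    (∃ c s : g →ₗ[ℂ] g →ₗ[ℂ] g,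
      (∀ k₁ k₂ : ℂ, IsAntiPreLie (k₁ • c + k₂ • s)) ∧
      (∀ x y : g, c x y - c y x = b₁ x y) ∧
      (∀ x y : g, s x y - s y x = b₂ x y)) ↔
    (∃ (V : Type u) (_ : AddCommGroup V) (_ : Module ℂ V)
        (ρ μ : g →ₗ[ℂ] V →ₗ[ℂ] V) (T : V →ₗ[ℂ] g),
      (∀ k₁ k₂ : ℂ, IsRep (k₁ • b₁ + k₂ • b₂) (k₁ • ρ + k₂ • μ)) ∧
      (∀ k₁ k₂ : ℂ, IsAntiO (k₁ • b₁ + k₂ • b₂) (k₁ • ρ + k₂ • μ) T) ∧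
      Function.Bijective T) :=
  compatible_antiPreLie_exists_iff_invertible_antiO_general
    (IsSMulRegular.of_ne_zero two_ne_zero) b₁ b₂ hcompat
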